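/- arXiv:2402.03265 — 8 statements merged into one kernel-verified Lean document; each statement's English description precedes it below -/
import Mathlib

section
/- For all smooth functions u, v : ℝ × ℝ → ℝ, the variational (Euler–Lagrange) derivative of the formal Lagrangian v·𝔈[u] with respect to u, which by the standard formula for a fifth-order Lagrangian equals v·(u_{xxx} + E(t)u_x + Q(t)) − ∂_t v − ∂_x( v·(E(t)u + F(t)u_{xx}) ) + ∂_x²( v·F(t)·u_x ) − ∂_x³( v·(B(t) + u) ) − ∂_x⁵ v, coincides pointwise with the adjoint expression 𝔉*[u,v](t,x) = v Q(t) + (u_x v_{xx} + u_{xx} v_x) F(t) − u v_x E(t) − B(t) v_{xxx} − v_{xxxxx} − u v_{xxx} − 3 u_x v_{xx} − 3 u_{xx} v_x − v_t. In other words, the adjoint equation to the fifth-order KdV equation 𝔈[u]=0 is 𝔉*[u,v]=0. -/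
open Real MeasureTheory

/-- Partial derivative with respect to the first (time) variable. -/
noncomputable def pt (f : ℝ → ℝ → ℝ) (t x : ℝ) : ℝ := deriv (fun s => f s x) t

/-- Partial derivative with respect to the second (space) variable. -/
noncomputable def px (f : ℝ → ℝ → ℝ) (t x : ℝ) : ℝ := deriv (fun y => f t y) x

/-- The fifth-order KdV expression
`𝔈[u] = u_t + u_xxxxx + B u_xxx + u u_xxx + E u u_x + F u_x u_xx + Q u`. -/
noncomputable def KdV (B E F Q : ℝ → ℝ) (u : ℝ → ℝ → ℝ) (t x : ℝ) : ℝ :=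
  pt u t x + px (px (px (px (px u)))) t x + B t * px (px (px u)) t x
    + u t x * px (px (px u)) t x + E t * (u t x * px u t x)
    + F t * (px u t x * px (px u) t x) + Q t * u t x

/-- The adjoint expression
`𝔉*[u,v] = v Q + (u_x v_xx + u_xx v_x) F − u v_x E − B v_xxx − v_xxxxx − u v_xxx
  − 3 u_x v_xx − 3 u_xx v_x − v_t`. -/
noncomputable def KdVAdj (B E F Q : ℝ → ℝ) (u v : ℝ → ℝ → ℝ) (t x : ℝ) : ℝ :=
  v t x * Q t + (px u t x * px (px v) t x + px (px u) t x * px v t x) * F t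
    - u t x * px v t x * E t - B t * px (px (px v)) t x
    - px (px (px (px (px v)))) t x - u t x * px (px (px v)) t x
    - 3 * px u t x * px (px v) t x - 3 * px (px u) t x * px v t x - pt v t x

/-!
Since the coefficients do not depend on `x`, the Leibniz rule expands `(v (E u + F u_xx))_x`,
`(v F u_x)_xx` and `(v (B + u))_xxx` into products of space derivatives of `u` and `v`. With their
signs, the terms in which `v` is not differentiated are `-v E u_x`, `-v F u_xxx`, `v F u_xxx` and
`-v u_xxx`. They cancel among themselves and against the terms `v E u_x` and `v u_xxx` of
`∂(v 𝔈[u])/∂u`, which leaves the adjoint expression.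
-/

section Slice

variable {𝕜 X Y Z : Type*} [NontriviallyNormedField 𝕜]
  [NormedAddCommGroup X] [NormedSpace 𝕜 X] [NormedAddCommGroup Y] [NormedSpace 𝕜 Y]
  [NormedAddCommGroup Z] [NormedSpace 𝕜 Z]

theorem contDiff_slice_of_uncurry {n : WithTop ℕ∞} {f : X → Y → Z}
    (hf : ContDiff 𝕜 n (Function.uncurry f)) (a : X) : ContDiff 𝕜 n (f a) :=
  hf.comp (contDiff_prodMk_right a)

end Slice

section SpaceDerivative

variable {f g : ℝ → ℝ → ℝ} {t x : ℝ}

theorem contDiff_px {n : WithTop ℕ∞} (hf : ContDiff ℝ (n + 1) (f t)) : ContDiff ℝ n (px f t) :=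
  hf.deriv'

theorem px_coeff_add (c : ℝ → ℝ) (f : ℝ → ℝ → ℝ) : px (fun t x => c t + f t x) = px f :=
  funext fun t => deriv_const_add' (c t)

theorem px_coeff_mul (c : ℝ → ℝ) (f : ℝ → ℝ → ℝ) :
    px (fun t x => c t * f t x) = fun t x => c t * px f t x :=
  funext fun t => deriv_const_mul_field' (c t)

theorem px_add (hf : DifferentiableAt ℝ (f t) x) (hg : DifferentiableAt ℝ (g t) x) :
    px (fun t x => f t x + g t x) t x = px f t x + px g t x :=
  deriv_fun_add hf hg

theorem px_mul (hf : DifferentiableAt ℝ (f t) x) (hg : DifferentiableAt ℝ (g t) x) :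
    px (fun t x => f t x * g t x) t x = px f t x * g t x + f t x * px g t x :=
  deriv_fun_mul hf hg

theorem iterate_px_apply (n : ℕ) (f : ℝ → ℝ → ℝ) (t : ℝ) : px^[n] f t = iteratedDeriv n (f t) := by
  have slice_semiconj : Function.Semiconj (fun f : ℝ → ℝ → ℝ => f t) px deriv := fun _ => rfl
  rw [iteratedDeriv_eq_iterate]
  exact slice_semiconj.iterate_right n f

theorem iterate_px_mul {n : ℕ} (hf : ContDiffAt ℝ n (f t) x) (hg : ContDiffAt ℝ n (g t) x) :
    px^[n] (fun t x => f t x * g t x) t x =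
      ∑ i ∈ Finset.range (n + 1), n.choose i * px^[i] f t x * px^[n - i] g t x := by
  simp only [iterate_px_apply]
  exact iteratedDeriv_fun_mul hf hg

theorem px_px_mul (hf : ContDiffAt ℝ 2 (f t) x) (hg : ContDiffAt ℝ 2 (g t) x) :
    px (px (fun t x => f t x * g t x)) t x =
      px (px f) t x * g t x + 2 * (px f t x * px g t x) + f t x * px (px g) t x := by
  refine (iterate_px_mul (n := 2) hf hg).trans ?_
  simp only [Finset.sum_range_succ, Finset.sum_range_zero, Nat.choose, Nat.cast_ofNat, Nat.cast_one,
    Nat.reduceAdd, Nat.reduceSub, Function.iterate_succ_apply, Function.iterate_zero_apply]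
  ring

theorem px_px_px_mul (hf : ContDiffAt ℝ 3 (f t) x) (hg : ContDiffAt ℝ 3 (g t) x) :
    px (px (px (fun t x => f t x * g t x))) t x =
      px (px (px f)) t x * g t x + 3 * (px (px f) t x * px g t x)
        + 3 * (px f t x * px (px g) t x) + f t x * px (px (px g)) t x := by
  refine (iterate_px_mul (n := 3) hf hg).trans ?_
  simp only [Finset.sum_range_succ, Finset.sum_range_zero, Nat.choose, Nat.cast_ofNat, Nat.cast_one,
    Nat.reduceAdd, Nat.reduceSub, Function.iterate_succ_apply, Function.iterate_zero_apply]
  ring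

end SpaceDerivative

theorem adjoint_equation_of_fifth_order_KdV_general
    (B E F Q : ℝ → ℝ) (u v : ℝ → ℝ → ℝ) (t x : ℝ)
    (hu : ContDiff ℝ 3 (u t)) (hv : ContDiff ℝ 5 (Function.uncurry v)) :
    v t x * (px (px (px u)) t x + E t * px u t x + Q t)
      - pt v t x
      - px (fun t x => v t x * (E t * u t x + F t * px (px u) t x)) t x
      + px (px (fun t x => v t x * (F t * px u t x))) t x
      - px (px (px (fun t x => v t x * (B t + u t x)))) t x
      - px (px (px (px (px v)))) t x
    = KdVAdj B E F Q u v t x := by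
  have hu₁ : ContDiff ℝ 2 (px u t) := contDiff_px hu
  have hu₂ : ContDiff ℝ 1 (px (px u) t) := contDiff_px hu₁
  have hv₀ : ContDiff ℝ 3 (v t) := (contDiff_slice_of_uncurry hv t).of_le (by norm_num)
  have du : DifferentiableAt ℝ (u t) x := hu.differentiable (by norm_num) x
  have du₂ : DifferentiableAt ℝ (px (px u) t) x := hu₂.differentiable one_ne_zero x
  have dv : DifferentiableAt ℝ (v t) x := hv₀.differentiable (by norm_num) x
  have px_flux : px (fun t x => v t x * (E t * u t x + F t * px (px u) t x)) t x =
      px v t x * (E t * u t x + F t * px (px u) t x)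
        + v t x * (E t * px u t x + F t * px (px (px u)) t x) := by
    rw [px_mul dv ((du.const_mul (E t)).add (du₂.const_mul (F t))),
      px_add (du.const_mul (E t)) (du₂.const_mul (F t)), px_coeff_mul, px_coeff_mul]
  rw [px_flux, px_px_mul (hv₀.of_le (by norm_num)).contDiffAt (contDiff_const.mul hu₁).contDiffAt,
    px_px_px_mul hv₀.contDiffAt (contDiff_const.add hu).contDiffAt]
  simp only [px_coeff_mul, px_coeff_add, KdVAdj]
  ring

/-- the Euler–Lagrange (variational) derivative of the formal Lagrangian
`v·𝔈[u]` with respect to `u`, computed by the standard formula for a fifth-order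
Lagrangian, coincides pointwise with the adjoint expression `𝔉*[u,v]`; i.e. the adjoint
equation to `𝔈[u] = 0` is `𝔉*[u,v] = 0`. -/
theorem adjoint_equation_of_fifth_order_KdV
    (B E F Q : ℝ → ℝ)
    (hB : ContDiff ℝ (⊤ : ℕ∞) B) (hE : ContDiff ℝ (⊤ : ℕ∞) E)
    (hF : ContDiff ℝ (⊤ : ℕ∞) F) (hQ : ContDiff ℝ (⊤ : ℕ∞) Q)
    (u v : ℝ → ℝ → ℝ)
    (hu : ContDiff ℝ (⊤ : ℕ∞) (Function.uncurry u))
    (hv : ContDiff ℝ (⊤ : ℕ∞) (Function.uncurry v))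
    (t x : ℝ) :
    v t x * (px (px (px u)) t x + E t * px u t x + Q t)
      - pt v t x
      - px (fun t x => v t x * (E t * u t x + F t * px (px u) t x)) t x
      + px (px (fun t x => v t x * (F t * px u t x))) t x
      - px (px (px (fun t x => v t x * (B t + u t x)))) t x
      - px (px (px (px (px v)))) t x
    = KdVAdj B E F Q u v t x :=
  adjoint_equation_of_fifth_order_KdV_general B E F Q u v t x
    (contDiff_slice_of_uncurry (contDiff_infty.1 hu 3) t) (contDiff_infty.1 hv 5)
end

section
/- Let B, E, Q : ℝ → ℝ be smooth, take F(t) ≡ 2, let H : ℝ → ℝ satisfy H' = Q, and let c₁, c₂ ∈ ℝ. For a smooth u : ℝ × ℝ → ℝ define v(t,x) := c₁ e^{2H(t)} u(t,x) + c₂ e^{H(t)}. Then the pointwise identity 𝔉*[u,v](t,x) = −c₁ e^{2H(t)} · 𝔈[u](t,x) holds for all smooth u and all (t,x). In particular, the equation 𝔈[u]=0 with F(t)=2 is nonlinearly self-adjoint with substitution φ = c₁ e^{2∫Q dt} u + c₂ e^{∫Q dt} (and multiplier λ = −c₁ e^{2∫Q dt}). -/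
open Real MeasureTheory

/-!
Substitute `v = a(t) u + b(t)` with undetermined coefficients. All terms of `𝔉*[u,v] + a 𝔈[u]`
cancel except `3a(F - 2) u_x u_xx + (2Qa - a') u + (Qb - b')`, so `F = 2` is exactly what kills the
quadratic remainder, and the linear equations `a' = 2Qa`, `b' = Qb` are solved by
`a = c₁ e^{2H}`, `b = c₂ e^{H}` with `H' = Q`.
-/

theorem px_time_mul (a : ℝ → ℝ) (w : ℝ → ℝ → ℝ) :
    px (fun t x => a t * w t x) = fun t x => a t * px w t x := by
  funext t x
  exact deriv_const_mul_field (a t)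

theorem px_add_time (w : ℝ → ℝ → ℝ) (b : ℝ → ℝ) : px (fun t x => w t x + b t) = px w := by
  funext t x
  exact deriv_add_const (b t)

theorem pt_time_mul_add_time {a b : ℝ → ℝ} {u : ℝ → ℝ → ℝ} {a' b' t x : ℝ}
    (ha : HasDerivAt a a' t) (hb : HasDerivAt b b' t)
    (hu : DifferentiableAt ℝ (fun s => u s x) t) :
    pt (fun t x => a t * u t x + b t) t x = a' * u t x + a t * pt u t x + b' :=
  ((ha.mul hu.hasDerivAt).add hb).deriv

theorem KdVAdj_time_mul_add_time (B E F Q : ℝ → ℝ) {a b : ℝ → ℝ} {u : ℝ → ℝ → ℝ} {a' b' t x : ℝ}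
    (ha : HasDerivAt a a' t) (hb : HasDerivAt b b' t)
    (hu : DifferentiableAt ℝ (fun s => u s x) t) :
    KdVAdj B E F Q u (fun t x => a t * u t x + b t) t x
      = -a t * KdV B E F Q u t x
        + (3 * a t * (F t - 2) * (px u t x * px (px u) t x)
          + (2 * Q t * a t - a') * u t x + (Q t * b t - b')) := by
  simp only [KdVAdj, KdV, pt_time_mul_add_time ha hb hu, px_add_time, px_time_mul]
  ring

theorem hasDerivAt_const_mul_exp {G : ℝ → ℝ} {g t : ℝ} (hG : HasDerivAt G g t) (c : ℝ) :
    HasDerivAt (fun s => c * Real.exp (G s)) (g * (c * Real.exp (G t))) t :=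
  (hG.exp.const_mul c).congr_deriv (by ring)

theorem differentiableAt_time_of_uncurry {u : ℝ → ℝ → ℝ} {t x : ℝ}
    (hu : DifferentiableAt ℝ (Function.uncurry u) (t, x)) :
    DifferentiableAt ℝ (fun s => u s x) t :=
  hu.comp (f := fun s => (s, x)) t (differentiableAt_id.prodMk (differentiableAt_const x))

theorem nonlinear_self_adjointness_F_eq_two_general
    (B E F Q H : ℝ → ℝ) (c₁ c₂ : ℝ) {u : ℝ → ℝ → ℝ} (hu : ContDiff ℝ 5 (Function.uncurry u))
    {t : ℝ} (hF : F t = 2) (hH : HasDerivAt H (Q t) t) (x : ℝ) :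
    KdVAdj B E F Q u
        (fun t x => c₁ * Real.exp (2 * H t) * u t x + c₂ * Real.exp (H t)) t x
      = -(c₁ * Real.exp (2 * H t)) * KdV B E F Q u t x := by
  have ha := hasDerivAt_const_mul_exp (hH.const_mul 2) c₁
  have hb := hasDerivAt_const_mul_exp hH c₂
  have hut := differentiableAt_time_of_uncurry (hu.differentiable (by norm_num) (t, x))
  rw [KdVAdj_time_mul_add_time B E F Q ha hb hut, hF]
  ring

/-- for `F(t) ≡ 2`, with `H' = Q` and the substitution
`v = c₁ e^{2H} u + c₂ e^{H}`, one has the pointwise identity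
`𝔉*[u,v] = −c₁ e^{2H} · 𝔈[u]`; hence the equation with `F = 2` is nonlinearly
self-adjoint with `φ = c₁ e^{2∫Q} u + c₂ e^{∫Q}` and multiplier `λ = −c₁ e^{2∫Q}`. -/
theorem nonlinear_self_adjointness_F_eq_two
    (B E Q : ℝ → ℝ)
    (hB : ContDiff ℝ (⊤ : ℕ∞) B) (hE : ContDiff ℝ (⊤ : ℕ∞) E)
    (hQ : ContDiff ℝ (⊤ : ℕ∞) Q)
    (H : ℝ → ℝ) (hH : ∀ t, HasDerivAt H (Q t) t) (c₁ c₂ : ℝ)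
    (u : ℝ → ℝ → ℝ) (hu : ContDiff ℝ (⊤ : ℕ∞) (Function.uncurry u))
    (t x : ℝ) :
    KdVAdj B E (fun _ => 2) Q u
        (fun t x => c₁ * Real.exp (2 * H t) * u t x + c₂ * Real.exp (H t)) t x
      = -(c₁ * Real.exp (2 * H t)) * KdV B E (fun _ => 2) Q u t x := by
  exact nonlinear_self_adjointness_F_eq_two_general B E (fun _ => 2) Q H c₁ c₂
    (contDiff_infty.mp hu 5) rfl (hH t) x
end

section
/- Equivalence transformations of the class: Let A, B, C, E, F, Q : ℝ → ℝ be smooth with A, C nonvanishing, let k₁, k₂ ∈ ℝ, let R : ℝ → ℝ be smooth, and let α : ℝ → ℝ be a smooth bijection with α'(t) > 0 for all t. Suppose u : ℝ × ℝ → ℝ is smooth and satisfies u_t + A(t) u_{xxxxx} + B(t) u_{xxx} + C(t) u u_{xxx} + E(t) u u_x + F(t) u_x u_{xx} + Q(t) u = 0 everywhere. Define ũ : ℝ × ℝ → ℝ by ũ(α(t), e^{k₁}(x + k₂)) = e^{R(t) + k₁/2} u(t,x), and define coefficient functions by Ã(α(t)) = e^{5k₁} A(t)/α'(t), B̃(α(t))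 = e^{3k₁} B(t)/α'(t), C̃(α(t)) = e^{5k₁/2 − R(t)} C(t)/α'(t), Ẽ(α(t)) = e^{k₁/2 − R(t)} E(t)/α'(t), F̃(α(t)) = e^{5k₁/2 − R(t)} F(t)/α'(t), Q̃(α(t)) = (Q(t) − R'(t))/α'(t). Then ũ satisfies the equation of the same form: ũ_{t̃} + Ã(t̃) ũ_{x̃x̃x̃x̃x̃} + B̃(t̃) ũ_{x̃x̃x̃} + C̃(t̃) ũ ũ_{x̃x̃x̃} + Ẽ(t̃) ũ ũ_{x̃} + F̃(t̃) ũ_{x̃} ũ_{x̃x̃} + Q̃(t̃) ũ = 0 everywhere. -/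
open Real MeasureTheory

/-- The full class of fifth-order KdV equations with time-dependent coefficients and
linear damping: `u_t + A u_xxxxx + B u_xxx + C u u_xxx + E u u_x + F u_x u_xx + Q u`. -/
noncomputable def KdVfull (A B C E F Q : ℝ → ℝ) (u : ℝ → ℝ → ℝ) (t x : ℝ) : ℝ :=
  pt u t x + A t * px (px (px (px (px u)))) t x + B t * px (px (px u)) t x
    + C t * (u t x * px (px (px u)) t x) + E t * (u t x * px u t x)
    + F t * (px u t x * px (px u) t x) + Q t * u t x

/-!
Put `s = α(t)`, `y = l (x + k)` and `v'(s, y) = c(t) v(t, x)`. The chain rule gives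
`∂_y^n v' = c l⁻ⁿ ∂_x^n v` and `∂_s v' = (c v_t + c_t v) / α_t`, so each term of the equation is
rescaled, `(c_t / α_t) v` is absorbed by the damping, and the new coefficients are exactly those
for which the whole left-hand side is multiplied by the factor `c / α_t`.
-/

section ChangeOfVariable

theorem isHomeomorph_of_continuous_of_bijective {X Y : Type*}
    [ConditionallyCompleteLinearOrder X] [TopologicalSpace X] [OrderTopology X] [DenselyOrdered X]
    [LinearOrder Y] [TopologicalSpace Y] [OrderTopology Y]
    {f : X → Y} (hf : Continuous f) (hbij : Function.Bijective f) : IsHomeomorph f := by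
  rcases hf.strictMono_of_inj hbij.injective with hmono | hanti
  · exact (hmono.orderIsoOfSurjective f hbij.surjective).toHomeomorph.isHomeomorph
  · exact (StrictMono.orderIsoOfSurjective (OrderDual.toDual ∘ f) hanti.dual_right
      hbij.surjective).toHomeomorph.isHomeomorph

theorem hasDerivAt_of_comp_isHomeomorph {𝕜 E : Type*} [NontriviallyNormedField 𝕜]
    [NormedAddCommGroup E] [NormedSpace 𝕜 E] {φ : 𝕜 → 𝕜} {g : 𝕜 → E} {φ' t : 𝕜} {g' : E}
    (hφ : IsHomeomorph φ) (hderiv : HasDerivAt φ φ' t) (hne : φ' ≠ 0)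
    (hcomp : HasDerivAt (g ∘ φ) g' t) : HasDerivAt g (φ'⁻¹ • g') (φ t) := by
  set e := hφ.homeomorph φ
  have hleft : e.symm (φ t) = t := e.symm_apply_apply t
  have hright (s : 𝕜) : φ (e.symm s) = s := e.apply_symm_apply s
  rw [← hleft] at hderiv hcomp
  have hsymm : HasDerivAt e.symm φ'⁻¹ (φ t) :=
    hderiv.of_local_left_inverse e.symm.continuous.continuousAt hne (.of_forall hright)
  exact (hcomp.scomp (φ t) hsymm).congr_of_eventuallyEq
    (.of_forall fun s => (congrArg g (hright s)).symm)

end ChangeOfVariable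

section PartialDerivatives

variable {v v' : ℝ → ℝ → ℝ}

theorem px_of_scaling {s t a l k : ℝ} (hl : l ≠ 0)
    (h : ∀ x, v' s (l * (x + k)) = a * v t x) (x : ℝ) :
    px v' s (l * (x + k)) = a / l * px v t x := by
  have hchain : deriv (fun y => v' s (l * (y + k))) x = l * px v' s (l * (x + k)) := by
    rw [deriv_comp_add_const (fun y => v' s (l * y)), deriv_comp_mul_left, smul_eq_mul]
    rfl
  have hscaled : l * px v' s (l * (x + k)) = a * px v t x := by
    rw [← hchain, funext h, deriv_const_mul_field]
    rfl
  rw [div_mul_eq_mul_div, eq_div_iff hl, mul_comm, hscaled]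

theorem iterate_px_of_scaling {s t a l k : ℝ} (hl : l ≠ 0)
    (h : ∀ x, v' s (l * (x + k)) = a * v t x) (n : ℕ) :
    ∀ x, px^[n] v' s (l * (x + k)) = a / l ^ n * px^[n] v t x := by
  induction n with
  | zero => simpa using h
  | succ n ih =>
    simpa only [Function.iterate_succ_apply', pow_succ, div_div] using px_of_scaling hl ih

theorem pt_of_reparametrization {α c : ℝ → ℝ} {t x y : ℝ}
    (hα : IsHomeomorph α) (hα' : deriv α t ≠ 0) (hc : DifferentiableAt ℝ c t)
    (hv : DifferentiableAt ℝ (fun s => v s x) t) (h : ∀ s, v' (α s) y = c s * v s x) :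
    pt v' (α t) y = (deriv c t * v t x + c t * pt v t x) / deriv α t := by
  have hcomp : HasDerivAt ((fun s => v' s y) ∘ α) (deriv c t * v t x + c t * pt v t x) t :=
    (hc.hasDerivAt.mul hv.hasDerivAt).congr_of_eventuallyEq (.of_forall h)
  have hαt : HasDerivAt α (deriv α t) t := (differentiableAt_of_deriv_ne_zero hα').hasDerivAt
  rw [pt, (hasDerivAt_of_comp_isHomeomorph hα hαt hα' hcomp).deriv, smul_eq_mul,
    inv_mul_eq_div]

end PartialDerivatives

theorem KdVfull_of_rescaling {A B C E F Q A' B' C' E' F' Q' α c : ℝ → ℝ} {v v' : ℝ → ℝ → ℝ}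
    {l k t x : ℝ} (hl : l ≠ 0) (hα : IsHomeomorph α) (hα' : deriv α t ≠ 0)
    (hc : DifferentiableAt ℝ c t) (hc0 : c t ≠ 0) (hv : DifferentiableAt ℝ (fun s => v s x) t)
    (h : ∀ s y, v' (α s) (l * (y + k)) = c s * v s y)
    (hA : A' (α t) = l ^ 5 * A t / deriv α t)
    (hB : B' (α t) = l ^ 3 * B t / deriv α t)
    (hC : C' (α t) = l ^ 3 / c t * C t / deriv α t)
    (hE : E' (α t) = l / c t * E t / deriv α t)
    (hF : F' (α t) = l ^ 3 / c t * F t / deriv α t)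
    (hQ : Q' (α t) = (Q t - logDeriv c t) / deriv α t) :
    KdVfull A' B' C' E' F' Q' v' (α t) (l * (x + k)) =
      c t / deriv α t * KdVfull A B C E F Q v t x := by
  have hpx (n : ℕ) : px^[n] v' (α t) (l * (x + k)) = c t / l ^ n * px^[n] v t x :=
    iterate_px_of_scaling hl (h t) n x
  have hpt := pt_of_reparametrization hα hα' hc hv fun s => h s x
  have h₁ := hpx 1
  have h₂ := hpx 2
  have h₃ := hpx 3
  have h₅ := hpx 5
  simp only [Function.iterate_succ_apply, Function.iterate_zero_apply] at h₁ h₂ h₃ h₅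
  rw [KdVfull, KdVfull, hpt, h, h₁, h₂, h₃, h₅, hA, hB, hC, hE, hF, hQ, logDeriv_apply]
  field_simp
  ring

theorem logDeriv_exp_add_const {R : ℝ → ℝ} {t : ℝ} (hR : DifferentiableAt ℝ R t) (a : ℝ) :
    logDeriv (fun s => Real.exp (R s + a)) t = deriv R t := by
  rw [logDeriv_apply, (hR.hasDerivAt.add_const a).exp.deriv,
    mul_div_cancel_left₀ _ (Real.exp_ne_zero _)]

theorem equivalence_transformation_of_class_general
    (A B C E F Q : ℝ → ℝ) (k₁ k₂ : ℝ) (R : ℝ → ℝ) (hR : Differentiable ℝ R)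
    (α : ℝ → ℝ) (hαbij : Function.Bijective α) (hα' : ∀ t, deriv α t ≠ 0)
    (u : ℝ → ℝ → ℝ) (hu : ContDiff ℝ 5 (Function.uncurry u))
    (hsol : ∀ t x, KdVfull A B C E F Q u t x = 0)
    (u' : ℝ → ℝ → ℝ) (A' B' C' E' F' Q' : ℝ → ℝ)
    (hu' : ∀ t x, u' (α t) (Real.exp k₁ * (x + k₂)) = Real.exp (R t + k₁ / 2) * u t x)
    (hA' : ∀ t, A' (α t) = Real.exp (5 * k₁) * A t / deriv α t)
    (hB' : ∀ t, B' (α t) = Real.exp (3 * k₁) * B t / deriv α t)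
    (hC' : ∀ t, C' (α t) = Real.exp (5 * k₁ / 2 - R t) * C t / deriv α t)
    (hE' : ∀ t, E' (α t) = Real.exp (k₁ / 2 - R t) * E t / deriv α t)
    (hF' : ∀ t, F' (α t) = Real.exp (5 * k₁ / 2 - R t) * F t / deriv α t)
    (hQ' : ∀ t, Q' (α t) = (Q t - deriv R t) / deriv α t) :
    ∀ t' x', KdVfull A' B' C' E' F' Q' u' t' x' = 0 := by
  intro t' x'
  obtain ⟨t, rfl⟩ := hαbij.surjective t'
  obtain ⟨x, rfl⟩ : ∃ x, Real.exp k₁ * (x + k₂) = x' :=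
    ⟨x' / Real.exp k₁ - k₂, by rw [sub_add_cancel, mul_div_cancel₀ _ (Real.exp_ne_zero k₁)]⟩
  have hα : IsHomeomorph α := isHomeomorph_of_continuous_of_bijective
    (continuous_iff_continuousAt.2 fun s =>
      (differentiableAt_of_deriv_ne_zero (hα' s)).continuousAt) hαbij
  have hut : Differentiable ℝ fun s => u s x :=
    (hu.differentiable (by norm_num)).comp (differentiable_id.prodMk (differentiable_const x))
  have hexp (n : ℕ) : Real.exp k₁ ^ n = Real.exp (n * k₁) := (Real.exp_nat_mul k₁ n).symm
  have hC₀ : Real.exp k₁ ^ 3 / Real.exp (R t + k₁ / 2) = Real.exp (5 * k₁ / 2 - R t) := by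
    rw [hexp, ← Real.exp_sub]; push_cast; ring_nf
  have hE₀ : Real.exp k₁ / Real.exp (R t + k₁ / 2) = Real.exp (k₁ / 2 - R t) := by
    rw [← Real.exp_sub]; ring_nf
  rw [KdVfull_of_rescaling (c := fun s => Real.exp (R s + k₁ / 2)) (Real.exp_ne_zero k₁)
    hα (hα' t) ((hR t).add_const _).exp (Real.exp_ne_zero _) (hut t) hu'
    (by rw [hA', hexp, Nat.cast_ofNat]) (by rw [hB', hexp, Nat.cast_ofNat]) (by rw [hC', hC₀])
    (by rw [hE', hE₀]) (by rw [hF', hC₀]) (by rw [hQ', logDeriv_exp_add_const (hR t)]),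
    hsol, mul_zero]

/-- the equivalence transformation
`t̃ = α(t)`, `x̃ = e^{k₁}(x + k₂)`, `ũ = e^{R(t) + k₁/2} u`, with transformed coefficients
`Ã = e^{5k₁}A/α'`, `B̃ = e^{3k₁}B/α'`, `C̃ = e^{5k₁/2 − R}C/α'`, `Ẽ = e^{k₁/2 − R}E/α'`,
`F̃ = e^{5k₁/2 − R}F/α'`, `Q̃ = (Q − R')/α'`, maps solutions of the class to solutions of
an equation of the same differential structure. -/
theorem equivalence_transformation_of_class
    (A B C E F Q : ℝ → ℝ)
    (hA : ContDiff ℝ (⊤ : ℕ∞) A) (hB : ContDiff ℝ (⊤ : ℕ∞) B)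
    (hC : ContDiff ℝ (⊤ : ℕ∞) C) (hE : ContDiff ℝ (⊤ : ℕ∞) E)
    (hF : ContDiff ℝ (⊤ : ℕ∞) F) (hQ : ContDiff ℝ (⊤ : ℕ∞) Q)
    (hAne : ∀ t, A t ≠ 0) (hCne : ∀ t, C t ≠ 0)
    (k₁ k₂ : ℝ) (R : ℝ → ℝ) (hR : ContDiff ℝ (⊤ : ℕ∞) R)
    (α : ℝ → ℝ) (hα : ContDiff ℝ (⊤ : ℕ∞) α) (hαbij : Function.Bijective α)
    (hα' : ∀ t, 0 < deriv α t)
    (u : ℝ → ℝ → ℝ) (hu : ContDiff ℝ (⊤ : ℕ∞) (Function.uncurry u))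
    (hsol : ∀ t x, KdVfull A B C E F Q u t x = 0)
    (u' : ℝ → ℝ → ℝ) (A' B' C' E' F' Q' : ℝ → ℝ)
    (hu' : ∀ t x, u' (α t) (Real.exp k₁ * (x + k₂)) = Real.exp (R t + k₁ / 2) * u t x)
    (hA' : ∀ t, A' (α t) = Real.exp (5 * k₁) * A t / deriv α t)
    (hB' : ∀ t, B' (α t) = Real.exp (3 * k₁) * B t / deriv α t)
    (hC' : ∀ t, C' (α t) = Real.exp (5 * k₁ / 2 - R t) * C t / deriv α t)
    (hE' : ∀ t, E' (α t) = Real.exp (k₁ / 2 - R t) * E t / deriv α t)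
    (hF' : ∀ t, F' (α t) = Real.exp (5 * k₁ / 2 - R t) * F t / deriv α t)
    (hQ' : ∀ t, Q' (α t) = (Q t - deriv R t) / deriv α t) :
    ∀ t' x', KdVfull A' B' C' E' F' Q' u' t' x' = 0 :=
  equivalence_transformation_of_class_general A B C E F Q k₁ k₂ R (hR.differentiable (by simp)) α
    hαbij (fun t => (hα' t).ne') u (hu.of_le (by norm_cast)) hsol u' A' B' C' E' F' Q'
    hu' hA' hB' hC' hE' hF' hQ'
end

section
/- Reduction to normal form A = C = 1: Let A, B, C, E, F, Q : ℝ → ℝ be smooth with A(t) > 0 and C(t) nonvanishing, and let α : ℝ → ℝ be a smooth bijection with α'(t) = A(t) for all t. Suppose u : ℝ × ℝ → ℝ is smooth and satisfies u_t + A(t) u_{xxxxx} + B(t) u_{xxx} + C(t) u u_{xxx} + E(t) u u_x + F(t) u_x u_{xx} + Q(t) u = 0 everywhere. Define ũ : ℝ × ℝ → ℝ by ũ(α(t), x) = (C(t)/A(t)) u(t,x), and define B̃(α(t)) = B(t)/A(t), Ẽ(α(t)) = E(t)/C(t), F̃(α(t)) = F(t)/C(t), Q̃(α(t)) = (Q(t)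 + A'(t)/A(t) − C'(t)/C(t))/A(t). Then ũ satisfies ũ_{t̃} + ũ_{x̃x̃x̃x̃x̃} + B̃(t̃) ũ_{x̃x̃x̃} + ũ ũ_{x̃x̃x̃} + Ẽ(t̃) ũ ũ_{x̃} + F̃(t̃) ũ_{x̃} ũ_{x̃x̃} + Q̃(t̃) ũ = 0 everywhere, i.e. the transformed equation has Ã ≡ 1 and C̃ ≡ 1. -/
open Real MeasureTheory

/-!
Under a substitution `ũ(α(t), x) = σ(t) u(t, x)` every `x`-derivative is multiplied by `σ`, while
the chain rule gives `α' ũ_t̃ = σ u_t + σ' u`. Hence the KdV expression is multiplied by `σ / α'`,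
provided that the linear coefficients are divided by `α'`, the quadratic ones by `α' σ`, and the
damping is first shifted by `-σ' / σ`. The choices `α' = A` and `σ = C / A` make the coefficients
of `ũ_xxxxx` and `ũ ũ_xxx` equal to `1`.
-/

theorem hasDerivAt_of_comp {𝕜 E : Type*} [NontriviallyNormedField 𝕜] [CompleteSpace 𝕜]
    [NormedAddCommGroup E] [NormedSpace 𝕜 E] {f : 𝕜 → E} {f' : E} {α : 𝕜 → 𝕜} {α' t : 𝕜}
    (hf : HasDerivAt (f ∘ α) f' t) (hα : HasStrictDerivAt α α' t) (hα' : α' ≠ 0) :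
    HasDerivAt f (α'⁻¹ • f') (α t) := by
  have hinv := (hα.to_localInverse hα').hasDerivAt
  have hleft := (hα.eventually_left_inverse hα').self_of_nhds
  refine (hf.scomp_of_eq (α t) hinv hleft.symm).congr_of_eventuallyEq ?_
  filter_upwards [hα.eventually_right_inverse hα'] with s hs
  simp only [Function.comp_apply, hs]

theorem iterate_px_const_smul {f g : ℝ → ℝ → ℝ} {s t c : ℝ} (h : f s = c • g t) (n : ℕ) :
    px^[n] f s = c • px^[n] g t := by
  induction n with
  | zero => exact h
  | succ n ih =>
    funext x
    simp only [Function.iterate_succ_apply', px, ih, Pi.smul_apply, deriv_fun_const_smul_field]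

section Rescaling

variable {α σ : ℝ → ℝ} {α' σ' t x : ℝ} {u v : ℝ → ℝ → ℝ}

theorem mul_pt_of_rescaling (hα : HasStrictDerivAt α α' t) (hα' : α' ≠ 0)
    (hσ : HasDerivAt σ σ' t) (hu : DifferentiableAt ℝ (fun s => u s x) t)
    (hv : ∀ s, v (α s) = σ s • u s) :
    α' * pt v (α t) x = σ' * u t x + σ t * pt u t x := by
  have hcomp : (fun s => v s x) ∘ α = fun s => σ s * u s x := by
    funext s
    simp only [Function.comp_apply, hv, Pi.smul_apply, smul_eq_mul]
  have hprod : HasDerivAt ((fun s => v s x) ∘ α) (σ' * u t x + σ t * pt u t x) t :=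
    hcomp ▸ hσ.fun_mul hu.hasDerivAt
  rw [pt, (hasDerivAt_of_comp hprod hα hα').deriv, smul_eq_mul, mul_inv_cancel_left₀ hα']

theorem mul_KdVfull_of_rescaling {A B C E F Q A₁ B₁ C₁ E₁ F₁ Q₁ : ℝ → ℝ}
    (hα : HasStrictDerivAt α α' t) (hα' : α' ≠ 0)
    (hσ : HasDerivAt σ σ' t) (hu : DifferentiableAt ℝ (fun s => u s x) t)
    (hv : ∀ s, v (α s) = σ s • u s)
    (hA : α' * A₁ (α t) = A t) (hB : α' * B₁ (α t) = B t)
    (hC : α' * σ t * C₁ (α t) = C t) (hE : α' * σ t * E₁ (α t) = E t)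
    (hF : α' * σ t * F₁ (α t) = F t) (hQ : α' * σ t * Q₁ (α t) + σ' = σ t * Q t) :
    α' * KdVfull A₁ B₁ C₁ E₁ F₁ Q₁ v (α t) x = σ t * KdVfull A B C E F Q u t x := by
  have hpt := mul_pt_of_rescaling hα hα' hσ hu hv
  have hpx (n : ℕ) : px^[n] v (α t) x = σ t * px^[n] u t x :=
    congrFun (iterate_px_const_smul (hv t) n) x
  have h₀ : v (α t) x = σ t * u t x := hpx 0
  have h₁ : px v (α t) x = σ t * px u t x := hpx 1
  have h₂ : px (px v) (α t) x = σ t * px (px u) t x := hpx 2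
  have h₃ : px (px (px v)) (α t) x = σ t * px (px (px u)) t x := hpx 3
  have h₅ : px (px (px (px (px v)))) (α t) x = σ t * px (px (px (px (px u)))) t x := hpx 5
  simp only [KdVfull, h₀, h₁, h₂, h₃, h₅, ← hA, ← hB, ← hC, ← hE, ← hF]
  linear_combination hpt + u t x * hQ

end Rescaling

theorem reduction_to_normal_form_general {A B C E F Q α : ℝ → ℝ}
    (hA : Differentiable ℝ A) (hC : Differentiable ℝ C)
    (hAne : ∀ t, A t ≠ 0) (hCne : ∀ t, C t ≠ 0)
    (hαsurj : Function.Surjective α) (hα' : ∀ t, HasDerivAt α (A t) t)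
    {u u' : ℝ → ℝ → ℝ} (hu : ContDiff ℝ 5 (Function.uncurry u)) {B' E' F' Q' : ℝ → ℝ}
    (hu' : ∀ t x, u' (α t) x = (C t / A t) * u t x)
    (hB' : ∀ t, B' (α t) = B t / A t)
    (hE' : ∀ t, E' (α t) = E t / C t)
    (hF' : ∀ t, F' (α t) = F t / C t)
    (hQ' : ∀ t, Q' (α t) = (Q t + deriv A t / A t - deriv C t / C t) / A t) :
    (∀ t' x', KdVfull (fun _ => 1) B' (fun _ => 1) E' F' Q' u' t' x' = 0) ↔
      ∀ t x, KdVfull A B C E F Q u t x = 0 := by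
  rw [hαsurj.forall]
  refine forall₂_congr fun t x => ?_
  have hαt : HasStrictDerivAt α (A t) t :=
    hasStrictDerivAt_of_hasDerivAt_of_continuousAt (.of_forall hα') hA.continuous.continuousAt
  have hσ : HasDerivAt (fun s => C s / A s)
      ((deriv C t * A t - C t * deriv A t) / A t ^ 2) t :=
    (hC t).hasDerivAt.fun_div (hA t).hasDerivAt (hAne t)
  have hut : DifferentiableAt ℝ (fun s => u s x) t :=
    ((hu.differentiable (by norm_num)).comp (by fun_prop : Differentiable ℝ (·, x))) t
  have hcov : A t * KdVfull (fun _ => 1) B' (fun _ => 1) E' F' Q' u' (α t) x =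
      C t / A t * KdVfull A B C E F Q u t x := by
    have hAt := hAne t
    have hCt := hCne t
    apply mul_KdVfull_of_rescaling hαt hAt hσ hut fun s => funext (hu' s)
    · exact mul_one _
    · rw [hB', mul_div_cancel₀ _ hAt]
    · rw [mul_one, mul_div_cancel₀ _ hAt]
    · rw [hE']; field_simp
    · rw [hF']; field_simp
    · rw [hQ']; field_simp; ring
  rw [← mul_eq_zero_iff_left (hAne t), hcov,
    mul_eq_zero_iff_left (div_ne_zero (hCne t) (hAne t))]

/-- reduction to the normal form `A = C = 1`.  With `α' = A`,
`ũ(α(t), x) = (C/A) u(t,x)`, `B̃ = B/A`, `Ẽ = E/C`, `F̃ = F/C`,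
`Q̃ = (Q + A'/A − C'/C)/A`, the transformed function satisfies the equation of the class
with leading coefficients `Ã ≡ 1` and `C̃ ≡ 1`. -/
theorem reduction_to_normal_form
    (A B C E F Q : ℝ → ℝ)
    (hA : ContDiff ℝ (⊤ : ℕ∞) A) (hB : ContDiff ℝ (⊤ : ℕ∞) B)
    (hC : ContDiff ℝ (⊤ : ℕ∞) C) (hE : ContDiff ℝ (⊤ : ℕ∞) E)
    (hF : ContDiff ℝ (⊤ : ℕ∞) F) (hQ : ContDiff ℝ (⊤ : ℕ∞) Q)
    (hApos : ∀ t, 0 < A t) (hCne : ∀ t, C t ≠ 0)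
    (α : ℝ → ℝ) (hα : ContDiff ℝ (⊤ : ℕ∞) α) (hαbij : Function.Bijective α)
    (hα' : ∀ t, HasDerivAt α (A t) t)
    (u : ℝ → ℝ → ℝ) (hu : ContDiff ℝ (⊤ : ℕ∞) (Function.uncurry u))
    (hsol : ∀ t x, KdVfull A B C E F Q u t x = 0)
    (u' : ℝ → ℝ → ℝ) (B' E' F' Q' : ℝ → ℝ)
    (hu' : ∀ t x, u' (α t) x = (C t / A t) * u t x)
    (hB' : ∀ t, B' (α t) = B t / A t)
    (hE' : ∀ t, E' (α t) = E t / C t)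
    (hF' : ∀ t, F' (α t) = F t / C t)
    (hQ' : ∀ t, Q' (α t) = (Q t + deriv A t / A t - deriv C t / C t) / A t) :
    ∀ t' x', KdVfull (fun _ => 1) B' (fun _ => 1) E' F' Q' u' t' x' = 0 :=
  (reduction_to_normal_form_general (hA.differentiable (by simp))
    (hC.differentiable (by simp)) (fun t => (hApos t).ne') hCne hαbij.surjective hα'
    (contDiff_infty.1 hu 5) hu' hB' hE' hF' hQ').2 hsol
end

section
/- Conservation law from the multiplier e^{∫Q}: Let B, E, F, Q : ℝ → ℝ be smooth and let H : ℝ → ℝ satisfy H' = Q. Define the conserved density C¹(t,x) := e^{H(t)} u(t,x) and the flux C²(t,x) := e^{H(t)} ( u_{xxxx} + B(t) u_{xx} + u u_{xx} + ((F(t) − 1)/2) u_x² + (E(t)/2) u² ). Then for every smooth u : ℝ × ℝ → ℝ the pointwise identity ∂_t C¹ + ∂_x C² = e^{H(t)} · 𝔈[u] holds; in particular, if u satisfies 𝔈[u] = 0 everywhere, then ∂_t C¹ + ∂_x C² = 0 everywhere. -/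
/-!
The coefficients depend on `t` only, so `u u_xxx + F u_x u_xx` is the `x`-derivative of
`u u_xx + ((F - 1) / 2) u_x²`: the first summand contributes one copy of `u_x u_xx`, the second the
remaining `F - 1`. All other terms but `u_t` and `Q u` are visibly `x`-derivatives too, so
`𝔈[u] = u_t + ∂_x J + Q u` for some `J`. As `e^H` is independent of `x` and `(e^H)' = e^H Q`,
multiplication by `e^H` commutes with `∂_x` and turns `u_t + Q u` into `∂_t (e^H u)`.
-/

open Real MeasureTheory

section PartialDerivatives

variable {f : ℝ → ℝ → ℝ} {t x : ℝ}

theorem iterate_px_eq_iteratedDeriv (f : ℝ → ℝ → ℝ) (t : ℝ) (k : ℕ) :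
    px^[k] f t = iteratedDeriv k (f t) := by
  induction k with
  | zero => rw [iteratedDeriv_zero, Function.iterate_zero_apply]
  | succ k ih =>
    rw [iteratedDeriv_succ, ← ih, Function.iterate_succ_apply']
    rfl

theorem hasDerivAt_iterate_px {n : WithTop ℕ∞} {k : ℕ} (hf : ContDiffAt ℝ n (f t) x) (hk : k < n) :
    HasDerivAt (px^[k] f t) (px^[k + 1] f t x) x := by
  have differentiableAt : DifferentiableAt ℝ (iteratedDeriv k (f t)) x := by
    rw [← iteratedDerivWithin_univ, ← differentiableWithinAt_univ]
    exact hf.contDiffWithinAt.differentiableWithinAt_iteratedDerivWithin hk (by simp)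
  rw [iterate_px_eq_iteratedDeriv, iterate_px_eq_iteratedDeriv, iteratedDeriv_succ]
  exact differentiableAt.hasDerivAt

theorem pt_mul_left {m : ℝ → ℝ} {m' : ℝ} (hm : HasDerivAt m m' t)
    (hf : DifferentiableAt ℝ (fun s ↦ f s x) t) :
    pt (fun s y ↦ m s * f s y) t x = m' * f t x + m t * pt f t x :=
  (hm.mul hf.hasDerivAt).deriv

theorem px_mul_left (m : ℝ → ℝ) (f : ℝ → ℝ → ℝ) (t x : ℝ) :
    px (fun s y ↦ m s * f s y) t x = m t * px f t x :=
  deriv_const_mul_field (m t)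

end PartialDerivatives

theorem pt_mul_add_px_mul_of_integratingFactor {m : ℝ → ℝ} {q t x : ℝ} {u : ℝ → ℝ → ℝ}
    (hm : HasDerivAt m (m t * q) t) (hu : DifferentiableAt ℝ (fun s ↦ u s x) t)
    (J : ℝ → ℝ → ℝ) :
    pt (fun s y ↦ m s * u s y) t x + px (fun s y ↦ m s * J s y) t x
      = m t * (pt u t x + px J t x + q * u t x) := by
  rw [pt_mul_left hm hu, px_mul_left]
  ring

theorem hasDerivAt_mul_add_mul_sq {𝕜 : Type*} [NontriviallyNormedField 𝕜] [CharZero 𝕜]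
    {v v₁ v₂ : 𝕜 → 𝕜} {v₃ x : 𝕜} (h₀ : HasDerivAt v (v₁ x) x) (h₁ : HasDerivAt v₁ (v₂ x) x)
    (h₂ : HasDerivAt v₂ v₃ x) (a : 𝕜) :
    HasDerivAt (fun y ↦ v y * v₂ y + (a - 1) / 2 * v₁ y ^ 2)
      (v x * v₃ + a * (v₁ x * v₂ x)) x := by
  refine ((h₀.fun_mul h₂).fun_add ((h₁.fun_pow 2).const_mul ((a - 1) / 2))).congr_deriv ?_
  push_cast
  ring

/-- The flux `J` of the balance law `𝔈[u] = u_t + ∂_x J + Q u`; the flux `C²` of the conservation law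
is `e^H J`. -/
noncomputable def kdvFlux (B E F : ℝ → ℝ) (u : ℝ → ℝ → ℝ) (t x : ℝ) : ℝ :=
  px (px (px (px u))) t x + B t * px (px u) t x + u t x * px (px u) t x
    + (F t - 1) / 2 * px u t x ^ 2 + E t / 2 * u t x ^ 2

section BalanceLaw

variable {u : ℝ → ℝ → ℝ} {t x : ℝ}

theorem px_kdvFlux (B E F : ℝ → ℝ) (hu : ContDiffAt ℝ 5 (u t) x) :
    px (kdvFlux B E F u) t x
      = px (px (px (px (px u)))) t x + B t * px (px (px u)) t x
        + (u t x * px (px (px u)) t x + F t * (px u t x * px (px u) t x))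
        + E t * (u t x * px u t x) := by
  have h₀ : HasDerivAt (u t) (px u t x) x :=
    hasDerivAt_iterate_px (k := 0) hu (by norm_num)
  have h₁ : HasDerivAt (px u t) (px (px u) t x) x :=
    hasDerivAt_iterate_px (k := 1) hu (by norm_num)
  have h₂ : HasDerivAt (px (px u) t) (px (px (px u)) t x) x :=
    hasDerivAt_iterate_px (k := 2) hu (by norm_num)
  have h₄ : HasDerivAt (px (px (px (px u))) t) (px (px (px (px (px u)))) t x) x :=
    hasDerivAt_iterate_px (k := 4) hu (by norm_num)
  have linear := h₄.fun_add (h₂.const_mul (B t))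
  have quasilinear := hasDerivAt_mul_add_mul_sq h₀ h₁ h₂ (F t)
  have convective : HasDerivAt (fun y ↦ E t / 2 * u t y ^ 2) (E t * (u t x * px u t x)) x := by
    refine ((h₀.fun_pow 2).const_mul (E t / 2)).congr_deriv ?_
    push_cast
    ring
  refine (((linear.fun_add quasilinear).fun_add convective).congr_of_eventuallyEq ?_).deriv
  filter_upwards with y
  simp only [kdvFlux]
  ring

theorem kdV_eq_pt_add_px_kdvFlux (B E F Q : ℝ → ℝ) (hu : ContDiffAt ℝ 5 (u t) x) :
    KdV B E F Q u t x = pt u t x + px (kdvFlux B E F u) t x + Q t * u t x := by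
  rw [px_kdvFlux B E F hu, KdV]
  ring

theorem conservation_law_generic_multiplier_general (B E F Q : ℝ → ℝ) {H : ℝ → ℝ}
    (hH : HasDerivAt H (Q t) t) (hut : DifferentiableAt ℝ (fun s ↦ u s x) t)
    (hux : ContDiffAt ℝ 5 (u t) x) :
    pt (fun s y ↦ exp (H s) * u s y) t x + px (fun s y ↦ exp (H s) * kdvFlux B E F u s y) t x
      = exp (H t) * KdV B E F Q u t x := by
  rw [kdV_eq_pt_add_px_kdvFlux B E F Q hux]
  exact pt_mul_add_px_mul_of_integratingFactor hH.exp hut (kdvFlux B E F u)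

end BalanceLaw

/-- conservation law from the multiplier `e^{∫Q}`.  With `H' = Q`,
density `C¹ = e^{H} u` and flux
`C² = e^{H}( u_xxxx + B u_xx + u u_xx + ((F−1)/2) u_x² + (E/2) u² )`,
one has `∂_t C¹ + ∂_x C² = e^{H} 𝔈[u]` pointwise; in particular
`∂_t C¹ + ∂_x C² = 0` on solutions of `𝔈[u] = 0`. -/
theorem conservation_law_generic_multiplier
    (B E F Q : ℝ → ℝ)
    (hB : ContDiff ℝ (⊤ : ℕ∞) B) (hE : ContDiff ℝ (⊤ : ℕ∞) E)
    (hF : ContDiff ℝ (⊤ : ℕ∞) F) (hQ : ContDiff ℝ (⊤ : ℕ∞) Q)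
    (H : ℝ → ℝ) (hH : ∀ t, HasDerivAt H (Q t) t)
    (u : ℝ → ℝ → ℝ) (hu : ContDiff ℝ (⊤ : ℕ∞) (Function.uncurry u)) :
    (∀ t x,
      pt (fun t x => Real.exp (H t) * u t x) t x
        + px (fun t x => Real.exp (H t) *
            (px (px (px (px u))) t x + B t * px (px u) t x + u t x * px (px u) t x
              + ((F t - 1) / 2) * (px u t x) ^ 2 + (E t / 2) * (u t x) ^ 2)) t x
      = Real.exp (H t) * KdV B E F Q u t x)
    ∧ ((∀ t x, KdV B E F Q u t x = 0) →
      ∀ t x,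
        pt (fun t x => Real.exp (H t) * u t x) t x
          + px (fun t x => Real.exp (H t) *
              (px (px (px (px u))) t x + B t * px (px u) t x + u t x * px (px u) t x
                + ((F t - 1) / 2) * (px u t x) ^ 2 + (E t / 2) * (u t x) ^ 2)) t x
        = 0) := by
  have identity (t x : ℝ) :=
    conservation_law_generic_multiplier_general B E F Q (hH t)
      ((hu.comp (contDiff_prodMk_left x)).differentiable (by simp) t)
      (contDiff_infty.mp (hu.comp (contDiff_prodMk_right t)) 5).contDiffAt
  exact ⟨identity, fun sol t x ↦ (identity t x).trans (by rw [sol t x, mul_zero])⟩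
end

section
/- Conservation law for F(t) = 2 from the multiplier e^{2∫Q} u: Let B, E, Q : ℝ → ℝ be smooth, take F(t) ≡ 2, and let H : ℝ → ℝ satisfy H' = Q. Define the conserved density C¹(t,x) := (1/2) e^{2H(t)} u(t,x)² and the flux C²(t,x) := e^{2H(t)} ( u u_{xxxx} − u_x u_{xxx} + (1/2) u_{xx}² + B(t)( u u_{xx} − (1/2) u_x² ) + u² u_{xx} + (E(t)/3) u³ ). Then for every smooth u : ℝ × ℝ → ℝ the pointwise identity ∂_t C¹ + ∂_x C² = e^{2H(t)} u · 𝔈[u] holds; in particular, if u satisfies 𝔈[u] = 0 everywhere (with F(t) = 2), then ∂_t C¹ + ∂_x C² = 0 everywhere. -/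
/-!
Multiply `𝔈[u]` by `e^{2H} u`. As `H' = Q`, the terms `u_t + Q u` give `∂_t (½ e^{2H} u²)`. The
remaining terms form total `x`-derivatives: `v` times an odd-order derivative of `v` is one by
repeated integration by parts, `u² u_x = (u³/3)_x`, and
`u (u u_xxx + F u_x u_xx) = (u² u_xx)_x` precisely because `F = 2`.
-/

open Real MeasureTheory

section OddFlux

variable {𝕜 : Type*} [NontriviallyNormedField 𝕜]

/-- The primitive of `v` times the derivative of `v` of order `2k + 1`, namely
`v v⁽²ᵏ⁾ - v' v⁽²ᵏ⁻¹⁾ + ⋯ ± ½ (v⁽ᵏ⁾)²`, built by recursion so that each step is one integration by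
parts. -/
noncomputable def oddFlux : ℕ → (𝕜 → 𝕜) → 𝕜 → 𝕜
  | 0, v => fun x => (1 / 2) * v x ^ 2
  | k + 1, v => fun x => v x * deriv^[2 * k + 2] v x - oddFlux k (deriv v) x

theorem hasDerivAt_oddFlux [NeZero (2 : 𝕜)] {k : ℕ} {v : 𝕜 → 𝕜} {x : 𝕜}
    (hv : ∀ j ≤ 2 * k, DifferentiableAt 𝕜 (deriv^[j] v) x) :
    HasDerivAt (oddFlux k v) (v x * deriv^[2 * k + 1] v x) x := by
  induction k generalizing v with
  | zero =>
    have hv₀ : HasDerivAt v (deriv v x) x := (hv 0 le_rfl).hasDerivAt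
    have htwo : (2 : 𝕜) ≠ 0 := two_ne_zero
    have hcancel : 1 / 2 * (((2 : ℕ) : 𝕜) * v x ^ (2 - 1) * deriv v x) = v x * deriv v x := by
      push_cast
      field_simp
    exact ((hv₀.fun_pow 2).const_mul (1 / 2)).congr_deriv hcancel
  | succ k ih =>
    have hv₀ : HasDerivAt v (deriv v x) x := (hv 0 (Nat.zero_le _)).hasDerivAt
    have hv_top : HasDerivAt (deriv^[2 * k + 2] v) (deriv^[2 * k + 3] v x) x :=
      (hv (2 * k + 2) le_rfl).hasDerivAt.congr_deriv
        (congrFun (Function.iterate_succ_apply' deriv _ v) x).symm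
    have hrec : HasDerivAt (oddFlux k (deriv v)) (deriv v x * deriv^[2 * k + 2] v x) x :=
      ih fun j hj => hv (j + 1) (by lia)
    exact ((hv₀.fun_mul hv_top).fun_sub hrec).congr_deriv (add_sub_cancel_left _ _)

end OddFlux

theorem hasDerivAt_sq_mul_deriv_deriv {𝕜 : Type*} [NontriviallyNormedField 𝕜] {v : 𝕜 → 𝕜} {x : 𝕜}
    (hv : DifferentiableAt 𝕜 v x) (hv₂ : DifferentiableAt 𝕜 (deriv (deriv v)) x) :
    HasDerivAt (fun y => v y ^ 2 * deriv (deriv v) y)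
      (v x * (v x * deriv (deriv (deriv v)) x + 2 * (deriv v x * deriv (deriv v) x))) x :=
  ((hv.hasDerivAt.fun_pow 2).fun_mul hv₂.hasDerivAt).congr_deriv (by push_cast; ring)

/-- The conserved density `C¹ = ½ e^{2H} u²`. -/
noncomputable def conservedDensity (H : ℝ → ℝ) (u : ℝ → ℝ → ℝ) (t x : ℝ) : ℝ :=
  (1 / 2) * Real.exp (2 * H t) * (u t x) ^ 2

/-- The flux `C²` of `conservedDensity` for the equation with `F = 2`. -/
noncomputable def conservedFlux (B E H : ℝ → ℝ) (u : ℝ → ℝ → ℝ) (t x : ℝ) : ℝ :=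
  Real.exp (2 * H t) *
    (u t x * px (px (px (px u))) t x - px u t x * px (px (px u)) t x
      + (1 / 2) * (px (px u) t x) ^ 2
      + B t * (u t x * px (px u) t x - (1 / 2) * (px u t x) ^ 2)
      + (u t x) ^ 2 * px (px u) t x + (E t / 3) * (u t x) ^ 3)

section ConservationLaw

variable {B E H : ℝ → ℝ} {u : ℝ → ℝ → ℝ} {t x : ℝ}

theorem hasDerivAt_conservedDensity {q : ℝ} (hH : HasDerivAt H q t)
    (hut : DifferentiableAt ℝ (fun s => u s x) t) :
    HasDerivAt (fun s => conservedDensity H u s x)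
      (Real.exp (2 * H t) * u t x * (pt u t x + q * u t x)) t := by
  have hu : HasDerivAt (fun s => u s x) (pt u t x) t := hut.hasDerivAt
  have hexp := (hH.const_mul 2).exp.const_mul (1 / 2)
  exact (hexp.fun_mul (hu.fun_pow 2)).congr_deriv (by push_cast; ring)

theorem conservedFlux_eq_oddFlux (B E H : ℝ → ℝ) (u : ℝ → ℝ → ℝ) (t : ℝ) :
    conservedFlux B E H u t = fun y => Real.exp (2 * H t) *
      (oddFlux 2 (u t) y + B t * oddFlux 1 (u t) y + u t y ^ 2 * deriv (deriv (u t)) y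
        + E t / 3 * u t y ^ 3) := by
  funext y
  change Real.exp (2 * H t) * _ = Real.exp (2 * H t) *
    ((u t y * px (px (px (px u))) t y
        - (px u t y * px (px (px u)) t y - 1 / 2 * px (px u) t y ^ 2))
      + B t * (u t y * px (px u) t y - 1 / 2 * px u t y ^ 2)
      + u t y ^ 2 * px (px u) t y + E t / 3 * u t y ^ 3)
  ring

theorem hasDerivAt_conservedFlux
    (hux : ∀ j ≤ 4, DifferentiableAt ℝ (deriv^[j] (u t)) x) :
    HasDerivAt (conservedFlux B E H u t)
      (Real.exp (2 * H t) * u t x *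
        (px (px (px (px (px u)))) t x + B t * px (px (px u)) t x + u t x * px (px (px u)) t x
          + E t * (u t x * px u t x) + 2 * (px u t x * px (px u) t x))) x := by
  have hfifth : HasDerivAt (oddFlux 2 (u t)) (u t x * px (px (px (px (px u)))) t x) x :=
    hasDerivAt_oddFlux hux
  have hthird : HasDerivAt (oddFlux 1 (u t)) (u t x * px (px (px u)) t x) x :=
    hasDerivAt_oddFlux fun j hj => hux j (by lia)
  have hquadratic : HasDerivAt (fun y => u t y ^ 2 * deriv (deriv (u t)) y)
      (u t x * (u t x * px (px (px u)) t x + 2 * (px u t x * px (px u) t x))) x :=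
    hasDerivAt_sq_mul_deriv_deriv (hux 0 (by lia)) (hux 2 (by lia))
  have hu : HasDerivAt (u t) (px u t x) x := (hux 0 (by lia)).hasDerivAt
  have hcubic := (hu.fun_pow 3).const_mul (E t / 3)
  rw [conservedFlux_eq_oddFlux]
  exact ((((hfifth.fun_add (hthird.const_mul (B t))).fun_add hquadratic).fun_add
    hcubic).const_mul (Real.exp (2 * H t))).congr_deriv (by push_cast; ring)

theorem conservation_law_F_eq_two_general {Q : ℝ → ℝ} (hH : HasDerivAt H (Q t) t)
    (hut : DifferentiableAt ℝ (fun s => u s x) t)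
    (hux : ∀ j ≤ 4, DifferentiableAt ℝ (deriv^[j] (u t)) x) :
    pt (conservedDensity H u) t x + px (conservedFlux B E H u) t x
      = Real.exp (2 * H t) * u t x * KdV B E (fun _ => 2) Q u t x := by
  have hdensity : pt (conservedDensity H u) t x = _ := (hasDerivAt_conservedDensity hH hut).deriv
  have hflux : px (conservedFlux B E H u) t x = _ := (hasDerivAt_conservedFlux hux).deriv
  rw [hdensity, hflux, KdV]
  ring

end ConservationLaw

/-- conservation law for `F ≡ 2` from the multiplier `e^{2∫Q} u`.
With `H' = Q`, density `C¹ = (1/2) e^{2H} u²` and flux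
`C² = e^{2H}( u u_xxxx − u_x u_xxx + (1/2) u_xx² + B(u u_xx − (1/2) u_x²) + u² u_xx
  + (E/3) u³ )`, one has `∂_t C¹ + ∂_x C² = e^{2H} u 𝔈[u]` pointwise; in particular
`∂_t C¹ + ∂_x C² = 0` on solutions with `F = 2`. -/
theorem conservation_law_F_eq_two
    (B E Q : ℝ → ℝ)
    (hB : ContDiff ℝ (⊤ : ℕ∞) B) (hE : ContDiff ℝ (⊤ : ℕ∞) E)
    (hQ : ContDiff ℝ (⊤ : ℕ∞) Q)
    (H : ℝ → ℝ) (hH : ∀ t, HasDerivAt H (Q t) t)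
    (u : ℝ → ℝ → ℝ) (hu : ContDiff ℝ (⊤ : ℕ∞) (Function.uncurry u)) :
    (∀ t x,
      pt (fun t x => (1 / 2) * Real.exp (2 * H t) * (u t x) ^ 2) t x
        + px (fun t x => Real.exp (2 * H t) *
            (u t x * px (px (px (px u))) t x - px u t x * px (px (px u)) t x
              + (1 / 2) * (px (px u) t x) ^ 2
              + B t * (u t x * px (px u) t x - (1 / 2) * (px u t x) ^ 2)
              + (u t x) ^ 2 * px (px u) t x + (E t / 3) * (u t x) ^ 3)) t x
      = Real.exp (2 * H t) * u t x * KdV B E (fun _ => 2) Q u t x)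
    ∧ ((∀ t x, KdV B E (fun _ => 2) Q u t x = 0) →
      ∀ t x,
        pt (fun t x => (1 / 2) * Real.exp (2 * H t) * (u t x) ^ 2) t x
          + px (fun t x => Real.exp (2 * H t) *
              (u t x * px (px (px (px u))) t x - px u t x * px (px (px u)) t x
                + (1 / 2) * (px (px u) t x) ^ 2
                + B t * (u t x * px (px u) t x - (1 / 2) * (px u t x) ^ 2)
                + (u t x) ^ 2 * px (px u) t x + (E t / 3) * (u t x) ^ 3)) t x
        = 0) := by
  have balance (t x : ℝ) : pt (conservedDensity H u) t x + px (conservedFlux B E H u) t x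
      = Real.exp (2 * H t) * u t x * KdV B E (fun _ => 2) Q u t x := by
    have hut : ContDiff ℝ (⊤ : ℕ∞) (fun s => u s x) := hu.comp (contDiff_prodMk_left x)
    have hux : ContDiff ℝ (⊤ : ℕ∞) (u t) := hu.comp (contDiff_prodMk_right t)
    exact conservation_law_F_eq_two_general (hH t) (hut.differentiable (by simp) t)
      fun j _ => (hux.iterate_deriv j).differentiable (by simp) x
  exact ⟨balance, fun hsol t x => (balance t x).trans (by rw [hsol, mul_zero])⟩
end

section
/- Finite scaling symmetry (exponentiation of the generator with k₂ ≠ 0, k₃ = δ = ρ = 0): Let b, e, q, f ∈ ℝ and on the domain t > 0 take B(t) = b t^{−2/5}, E(t) = e t^{−2/5}, F(t) = f, Q(t) = q/t. Suppose u : (0,∞) × ℝ → ℝ is smooth and satisfies 𝔈[u](t,x) = 0 for all t > 0, x ∈ ℝ. Then for every λ > 0 the function u_λ(t,x) := λ² u(λ⁵ t, λ x) also satisfies 𝔈[u_λ](t,x) = 0 for all t > 0, x ∈ ℝ. -/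
open Real MeasureTheory

/-!
Give `x` weight `1`, `t` weight `5` and `u` weight `-2`. Since `B` and `E` have weight `-2`, `F` has
weight `0` and `Q` has weight `-5`, every summand of `𝔈[u]` has weight `-7`. Hence
`𝔈[u_λ](t, x) = λ⁷ 𝔈[u](λ⁵ t, λ x)`, and solutions are carried to solutions.
-/

/-- The function `(t, x) ↦ c u(a t, k x)`; the paper's `u_λ` is `rescale (λ ^ 2) (λ ^ 5) λ u`. The
three factors are independent so that the family is stable under partial differentiation. -/
def rescale (c a k : ℝ) (u : ℝ → ℝ → ℝ) (t x : ℝ) : ℝ := c * u (a * t) (k * x)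

theorem pt_rescale (c a k : ℝ) (u : ℝ → ℝ → ℝ) :
    pt (rescale c a k u) = rescale (c * a) a k (pt u) := by
  funext t x
  calc deriv (fun s => c * u (a * s) (k * x)) t
      = c * deriv (fun s => u (a * s) (k * x)) t := deriv_const_mul_field c
    _ = c * (a * deriv (fun s => u s (k * x)) (a * t)) :=
        congrArg (c * ·) (deriv_comp_mul_left a (fun s => u s (k * x)) t)
    _ = c * a * deriv (fun s => u s (k * x)) (a * t) := (mul_assoc _ _ _).symm

theorem px_rescale (c a k : ℝ) (u : ℝ → ℝ → ℝ) :
    px (rescale c a k u) = rescale (c * k) a k (px u) := by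
  funext t x
  calc deriv (fun y => c * u (a * t) (k * y)) x
      = c * deriv (fun y => u (a * t) (k * y)) x := deriv_const_mul_field c
    _ = c * (k * deriv (fun y => u (a * t) y) (k * x)) :=
        congrArg (c * ·) (deriv_comp_mul_left k (fun y => u (a * t) y) x)
    _ = c * k * deriv (fun y => u (a * t) y) (k * x) := (mul_assoc _ _ _).symm

theorem KdV_rescale {B E F Q : ℝ → ℝ} {l t : ℝ}
    (hB : l ^ 2 * B (l ^ 5 * t) = B t) (hE : l ^ 2 * E (l ^ 5 * t) = E t)
    (hF : F (l ^ 5 * t) = F t) (hQ : l ^ 5 * Q (l ^ 5 * t) = Q t)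
    (u : ℝ → ℝ → ℝ) (x : ℝ) :
    KdV B E F Q (rescale (l ^ 2) (l ^ 5) l u) t x
      = l ^ 7 * KdV B E F Q u (l ^ 5 * t) (l * x) := by
  simp only [KdV, pt_rescale, px_rescale, rescale, ← hB, ← hE, ← hF, ← hQ]
  ring

theorem pow_mul_rpow_neg_div {l t : ℝ} (hl : 0 < l) (ht : 0 ≤ t) (m : ℕ) {n : ℕ} (hn : n ≠ 0) :
    l ^ m * (l ^ n * t) ^ (-(m : ℝ) / n) = t ^ (-(m : ℝ) / n) := by
  have hn' : (n : ℝ) ≠ 0 := Nat.cast_ne_zero.mpr hn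
  have hpow : (l ^ n) ^ (-(m : ℝ) / n) = (l ^ m)⁻¹ := by
    rw [← rpow_natCast_mul hl.le, mul_div_cancel₀ _ hn', rpow_neg hl.le, rpow_natCast]
  rw [mul_rpow (pow_nonneg hl.le n) ht, hpow, mul_inv_cancel_left₀ (pow_ne_zero m hl.ne')]

theorem finite_scaling_symmetry_general
    (b e q f : ℝ)
    (u : ℝ → ℝ → ℝ)
    (hsol : ∀ t > (0 : ℝ), ∀ x : ℝ,
      KdV (fun t => b * t ^ ((-2 : ℝ) / 5)) (fun t => e * t ^ ((-2 : ℝ) / 5))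
        (fun _ => f) (fun t => q / t) u t x = 0) :
    ∀ l > (0 : ℝ), ∀ t > (0 : ℝ), ∀ x : ℝ,
      KdV (fun t => b * t ^ ((-2 : ℝ) / 5)) (fun t => e * t ^ ((-2 : ℝ) / 5))
        (fun _ => f) (fun t => q / t)
        (fun t x => l ^ 2 * u (l ^ 5 * t) (l * x)) t x = 0 := by
  intro l hl t ht x
  have hpow : l ^ 2 * (l ^ 5 * t) ^ ((-2 : ℝ) / 5) = t ^ ((-2 : ℝ) / 5) :=
    mod_cast pow_mul_rpow_neg_div hl ht.le 2 (n := 5) (by norm_num)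
  have hpow_const (c : ℝ) :
      l ^ 2 * (c * (l ^ 5 * t) ^ ((-2 : ℝ) / 5)) = c * t ^ ((-2 : ℝ) / 5) := by
    rw [mul_left_comm, hpow]
  have hdiv : l ^ 5 * (q / (l ^ 5 * t)) = q / t := by
    field_simp
  have hzero := hsol (l ^ 5 * t) (by positivity) (l * x)
  exact (KdV_rescale (hpow_const b) (hpow_const e) rfl hdiv u x).trans
    (mul_eq_zero_of_right _ hzero)

/-- finite scaling symmetry.  For `B(t) = b t^{−2/5}`, `E(t) = e t^{−2/5}`,
`F(t) = f`, `Q(t) = q/t` on `t > 0`, if `u` solves `𝔈[u] = 0` there, then for every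
`λ > 0` so does `u_λ(t,x) = λ² u(λ⁵ t, λ x)`. -/
theorem finite_scaling_symmetry
    (b e q f : ℝ)
    (u : ℝ → ℝ → ℝ)
    (hu : ContDiffOn ℝ (⊤ : ℕ∞) (Function.uncurry u)
      (Set.Ioi (0 : ℝ) ×ˢ (Set.univ : Set ℝ)))
    (hsol : ∀ t > (0 : ℝ), ∀ x : ℝ,
      KdV (fun t => b * t ^ ((-2 : ℝ) / 5)) (fun t => e * t ^ ((-2 : ℝ) / 5))
        (fun _ => f) (fun t => q / t) u t x = 0) :
    ∀ l > (0 : ℝ), ∀ t > (0 : ℝ), ∀ x : ℝ,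
      KdV (fun t => b * t ^ ((-2 : ℝ) / 5)) (fun t => e * t ^ ((-2 : ℝ) / 5))
        (fun _ => f) (fun t => q / t)
        (fun t x => l ^ 2 * u (l ^ 5 * t) (l * x)) t x = 0 :=
  finite_scaling_symmetry_general b e q f u hsol
end

section
/- Finite symmetry from the generator ∂_t + δ(t)∂_x + σ(t)∂_u (Case 2, F constant; it also covers Case 1, F = 0): Let q, e, f, s₀, ε ∈ ℝ. Take E(t) ≡ e, Q(t) ≡ q, F(t) ≡ f, and let s(t) := s₀ e^{−qt}. Let g : ℝ → ℝ be smooth with g'(t) = e·s(t) for all t, and let B : ℝ → ℝ be smooth with B(t) − B(t − ε) = −s(t) for all t. Suppose u : ℝ × ℝ → ℝ is smooth and satisfies 𝔈[u] = 0 everywhere. Then w(t,x) := u(t − ε, x − g(t)) + s(t) also satisfies 𝔈[w] = 0 everywhere. -/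
open Real MeasureTheory

/-!
Substituting `w(t, x) = u(t - ε, x - g(t)) + s(t)` into `𝔈` with time-dependent coefficients, the
transport term `-g' u_x` produced by the moving frame cancels `E s u_x` when `g' = E s`, and `s'`
cancels `Q s` when `s' = -Q s`. What is left is `𝔈[u]` at `(t - ε, x - g(t))` with the coefficients
shifted in time by `ε` and with `s` added to `B`, the latter coming from `u u_xxx`. The relation
`B(t) - B(t - ε) = -s(t)` together with `ε`-periodic `E`, `F`, `Q` says that these are the
original coefficients.
-/

/-- The action on functions `u(t, x)` of the point transformation
`(t, x, u) ↦ (t + ε, x + g(t + ε), u + s(t + ε))`, which takes the graph of `u` to the graph of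
`pointTransform ε g s u`. -/
def pointTransform (ε : ℝ) (g s : ℝ → ℝ) (u : ℝ → ℝ → ℝ) (t x : ℝ) : ℝ :=
  u (t - ε) (x - g t) + s t

theorem pt_eq_fderiv {u : ℝ → ℝ → ℝ} {t x : ℝ}
    (hu : DifferentiableAt ℝ (Function.uncurry u) (t, x)) :
    pt u t x = fderiv ℝ (Function.uncurry u) (t, x) (1, 0) :=
  (hu.hasFDerivAt.comp_hasDerivAt t (f := fun r => (r, x))
    ((hasDerivAt_id t).prodMk (hasDerivAt_const t x))).deriv

theorem px_eq_fderiv {u : ℝ → ℝ → ℝ} {t x : ℝ}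
    (hu : DifferentiableAt ℝ (Function.uncurry u) (t, x)) :
    px u t x = fderiv ℝ (Function.uncurry u) (t, x) (0, 1) :=
  (hu.hasFDerivAt.comp_hasDerivAt x (f := fun y => (t, y))
    ((hasDerivAt_const x t).prodMk (hasDerivAt_id x))).deriv

theorem hasDerivAt_comp_curve {u : ℝ → ℝ → ℝ} {a b : ℝ → ℝ} {a' b' r : ℝ}
    (hu : DifferentiableAt ℝ (Function.uncurry u) (a r, b r))
    (ha : HasDerivAt a a' r) (hb : HasDerivAt b b' r) :
    HasDerivAt (fun r => u (a r) (b r)) (a' * pt u (a r) (b r) + b' * px u (a r) (b r)) r := by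
  have hsplit : ((a', b') : ℝ × ℝ) = a' • (1, 0) + b' • (0, 1) := by simp
  have hcomp := hu.hasFDerivAt.comp_hasDerivAt r (f := fun r => (a r, b r)) (ha.prodMk hb)
  rw [hsplit, map_add, map_smul, map_smul, ← pt_eq_fderiv hu, ← px_eq_fderiv hu] at hcomp
  exact hcomp

theorem px_pointTransform (ε : ℝ) (g s : ℝ → ℝ) (u : ℝ → ℝ → ℝ) :
    px (pointTransform ε g s u) = pointTransform ε g 0 (px u) := by
  funext t x
  simp only [px, pointTransform, deriv_add_const, Pi.zero_apply, add_zero]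
  exact deriv_comp_sub_const (f := u (t - ε)) (g t) x

theorem pt_pointTransform {ε : ℝ} {g s : ℝ → ℝ} {u : ℝ → ℝ → ℝ} {t x g' s' : ℝ}
    (hu : DifferentiableAt ℝ (Function.uncurry u) (t - ε, x - g t))
    (hg : HasDerivAt g g' t) (hs : HasDerivAt s s' t) :
    pt (pointTransform ε g s u) t x
      = pt u (t - ε) (x - g t) - g' * px u (t - ε) (x - g t) + s' := by
  have hcurve := hasDerivAt_comp_curve (a := fun r => r - ε) (b := fun r => x - g r) hu
    ((hasDerivAt_id t).sub_const ε) (hg.const_sub x)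
  have hderiv : pt (pointTransform ε g s u) t x = _ := (hcurve.add hs).deriv
  rw [hderiv]
  ring

theorem KdV_pointTransform {B E F Q g s : ℝ → ℝ} {ε t x : ℝ} {u : ℝ → ℝ → ℝ}
    (hu : DifferentiableAt ℝ (Function.uncurry u) (t - ε, x - g t))
    (hg : HasDerivAt g (E t * s t) t) (hs : HasDerivAt s (-Q t * s t) t) :
    KdV B E F Q (pointTransform ε g s u) t x
      = KdV (fun r => B (r + ε) + s (r + ε)) (fun r => E (r + ε)) (fun r => F (r + ε))
          (fun r => Q (r + ε)) u (t - ε) (x - g t) := by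
  simp only [KdV, pt_pointTransform hu hg hs, px_pointTransform, pointTransform, Pi.zero_apply,
    sub_add_cancel]
  ring

theorem hasDerivAt_const_mul_exp_mul (a k t : ℝ) :
    HasDerivAt (fun t => a * Real.exp (k * t)) (k * (a * Real.exp (k * t))) t :=
  (((hasDerivAt_id t).const_mul k).exp.const_mul a).congr_deriv (by simp only [id]; ring)

theorem finite_symmetry_time_translation_case_general {B E F Q g s : ℝ → ℝ} {ε : ℝ}
    (hE : Function.Periodic E ε) (hF : Function.Periodic F ε) (hQ : Function.Periodic Q ε)
    (hg : ∀ t, HasDerivAt g (E t * s t) t) (hs : ∀ t, HasDerivAt s (-Q t * s t) t)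
    (hB : ∀ t, B t - B (t - ε) = -s t)
    {u : ℝ → ℝ → ℝ} (hu : ContDiff ℝ 5 (Function.uncurry u))
    (hsol : ∀ t x, KdV B E F Q u t x = 0) (t x : ℝ) :
    KdV B E F Q (pointTransform ε g s u) t x = 0 := by
  have hBs : (fun r => B (r + ε) + s (r + ε)) = B := by
    funext r
    have hr := hB (r + ε)
    rw [add_sub_cancel_right] at hr
    linear_combination hr
  rw [KdV_pointTransform (hu.differentiable (by norm_num) _) (hg t) (hs t), hBs, funext hE,
    funext hF, funext hQ]
  exact hsol (t - ε) (x - g t)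


/-- finite symmetry from the generator `∂_t + δ(t)∂_x + σ(t)∂_u`
(Case 2, `F` constant; covering also Case 1 with `F = 0`).  With constants
`E ≡ e`, `Q ≡ q`, `F ≡ f`, `s(t) = s₀ e^{−qt}`, `g' = e·s`, and
`B(t) − B(t − ε) = −s(t)`, if `u` solves `𝔈[u] = 0` then so does
`w(t,x) = u(t − ε, x − g(t)) + s(t)`. -/
theorem finite_symmetry_time_translation_case
    (q e f s₀ ε : ℝ)
    (g : ℝ → ℝ) (hg : ContDiff ℝ (⊤ : ℕ∞) g)
    (hg' : ∀ t, HasDerivAt g (e * (s₀ * Real.exp (-q * t))) t)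
    (B : ℝ → ℝ) (hB : ContDiff ℝ (⊤ : ℕ∞) B)
    (hBshift : ∀ t, B t - B (t - ε) = -(s₀ * Real.exp (-q * t)))
    (u : ℝ → ℝ → ℝ) (hu : ContDiff ℝ (⊤ : ℕ∞) (Function.uncurry u))
    (hsol : ∀ t x, KdV B (fun _ => e) (fun _ => f) (fun _ => q) u t x = 0) :
    ∀ t x, KdV B (fun _ => e) (fun _ => f) (fun _ => q)
      (fun t x => u (t - ε) (x - g t) + s₀ * Real.exp (-q * t)) t x = 0 := by
  exact finite_symmetry_time_translation_case_general (fun _ => rfl) (fun _ => rfl) (fun _ => rfl)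
    hg' (hasDerivAt_const_mul_exp_mul s₀ (-q)) hBshift (contDiff_infty.mp hu 5) hsol
end
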